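/- arXiv:1902.02024 — 2 statements merged into one kernel-verified Lean document; each statement's English description precedes it below -/
import Mathlib

section
/- Let ℓ, β ∈ ℝ and let s : ℝ → ℝ be a function differentiable at α₀ which satisfies cos β = -cos α · cos(s(α) - α) + sin α · sin(s(α) - α) · cos ℓ for all α in some neighborhood of α₀. If s'(α₀) = 0, then (1 - cos ℓ) · sin(2α₀ - s(α₀)) = 0. -/
open Real

/-!
Product-to-sum rewrites the law of cosines for the angles `α` and `s - α` as
`2 cos β = -((1 + cos ℓ) cos s + (1 - cos ℓ) cos (2α - s))`. Where `s' = 0` the first term is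
stationary, so differentiating in `α` leaves only `2 (1 - cos ℓ) sin (2α - s) = 0`.
-/

theorem two_mul_neg_cos_mul_cos_sub_add_sin_mul_sin_sub_mul (k α s : ℝ) :
    2 * (-cos α * cos (s - α) + sin α * sin (s - α) * k) =
      -((1 + k) * cos s + (1 - k) * cos (2 * α - s)) := by
  have h_diff : α - (s - α) = 2 * α - s := by ring
  have h_cos := two_mul_cos_mul_cos α (s - α)
  have h_sin := two_mul_sin_mul_sin α (s - α)
  rw [h_diff, add_sub_cancel] at h_cos h_sin
  linear_combination k * h_sin - h_cos

/-- Besides spherical triangles, where `k = cos ℓ`, this covers hyperbolic ones, where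
`k = cosh ℓ`. -/
theorem stmt_1_general {k c s' α₀ : ℝ} {s : ℝ → ℝ} (hs : HasDerivAt s s' α₀)
    (hrel : ∀ᶠ α in nhds α₀, c = -cos α * cos (s α - α) + sin α * sin (s α - α) * k) :
    (1 + k) * sin (s α₀) * s' + (1 - k) * sin (2 * α₀ - s α₀) * (2 - s') = 0 := by
  have h_const : (fun α ↦ (1 + k) * cos (s α) + (1 - k) * cos (2 * α - s α))
      =ᶠ[nhds α₀] fun _ ↦ -(2 * c) := by
    filter_upwards [hrel] with α hα
    rw [hα, two_mul_neg_cos_mul_cos_sub_add_sin_mul_sin_sub_mul, neg_neg]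
  have h_zero := (hasDerivAt_const α₀ (-(2 * c))).congr_of_eventuallyEq h_const
  have h_deriv := (hs.cos.const_mul (1 + k)).add
    ((((hasDerivAt_id' α₀).const_mul 2).sub hs).cos.const_mul (1 - k))
  linear_combination -h_deriv.unique h_zero

theorem stmt_1 (ℓ β α₀ : ℝ) (s : ℝ → ℝ)
    (hdiff : DifferentiableAt ℝ s α₀)
    (hrel : ∀ᶠ α in nhds α₀,
      Real.cos β = -Real.cos α * Real.cos (s α - α)
        + Real.sin α * Real.sin (s α - α) * Real.cos ℓ)
    (hcrit : deriv s α₀ = 0) :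
    (1 - Real.cos ℓ) * Real.sin (2 * α₀ - s α₀) = 0 := by
  have h_implicit := stmt_1_general (hcrit ▸ hdiff.hasDerivAt) hrel
  linear_combination h_implicit / 2
end

section
/- Let ℓ, β ∈ ℝ with cos ℓ ≠ 1, and let s : ℝ → ℝ be a function differentiable at α₀ which satisfies cos β = -cos α · cos(s(α) - α) + sin α · sin(s(α) - α) · cos ℓ for all α in some neighborhood of α₀. If s'(α₀) = 0 and 2α₀ - s(α₀) ∈ (-π, π), then s(α₀) = 2α₀; that is, any critical point of the angle-sum function corresponds to an isosceles spherical triangle. -/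
/-!
By the product-to-sum formulas, the law of cosines for angles reads
`-2 cos C = (1 + c) cos (A + B) + (1 - c) cos (A - B)`. If `C` is held fixed and `A + B` is
stationary, differentiating leaves `(1 - c) sin (A - B) = 0`. The value `c = 1` is the Euclidean
case, where `A + B` is constant and every triangle is critical.
-/

open Real

open scoped Topology

/-- The right-hand side of the law of cosines for angles: the cosine of the third angle of a
triangle with angles `A` and `B` adjacent to a side of length `ℓ`. The side enters only through
`c`, which is `cos ℓ` on the sphere, `cosh ℓ` in the hyperbolic plane and `1` in the Euclidean
plane. -/
noncomputable def cosThirdAngle (c A B : ℝ) : ℝ :=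
  -cos A * cos B + sin A * sin B * c

theorem cosThirdAngle_eq_cos_add_cos_sub (c A B : ℝ) :
    cosThirdAngle c A B = -((1 + c) * cos (A + B) + (1 - c) * cos (A - B)) / 2 := by
  rw [cosThirdAngle, cos_add, cos_sub]
  ring

section Variation

variable {c t A' B' : ℝ} {A B : ℝ → ℝ}

theorem hasDerivAt_cosThirdAngle (c : ℝ) (hA : HasDerivAt A A' t) (hB : HasDerivAt B B' t) :
    HasDerivAt (fun u ↦ cosThirdAngle c (A u) (B u))
      (((1 + c) * sin (A t + B t) * (A' + B') + (1 - c) * sin (A t - B t) * (A' - B')) / 2) t := by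
  simp only [cosThirdAngle_eq_cos_add_cos_sub]
  have hsum := (hA.fun_add hB).cos.const_mul (1 + c)
  have hdiff := (hA.fun_sub hB).cos.const_mul (1 - c)
  exact ((hsum.fun_add hdiff).fun_neg.div_const 2).congr_deriv (by ring)

theorem sin_sub_eq_zero_of_eventually_cosThirdAngle_eq {k : ℝ} (hc : c ≠ 1) (hA' : A' ≠ 0)
    (hA : HasDerivAt A A' t) (hB : HasDerivAt B (-A') t)
    (hconst : ∀ᶠ u in 𝓝 t, cosThirdAngle c (A u) (B u) = k) :
    sin (A t - B t) = 0 := by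
  have hderiv := (hasDerivAt_cosThirdAngle c hA hB).unique
    ((hasDerivAt_const t k).congr_of_eventuallyEq hconst)
  have hprod : (1 - c) * A' * sin (A t - B t) = 0 := by linear_combination hderiv
  exact (mul_eq_zero.mp hprod).resolve_left (mul_ne_zero (sub_ne_zero.mpr hc.symm) hA')

end Variation

theorem stmt_2_general {c k α₀ : ℝ} {s : ℝ → ℝ} (hc : c ≠ 1) (hs : HasDerivAt s 0 α₀)
    (hconst : ∀ᶠ α in 𝓝 α₀, cosThirdAngle c α (s α - α) = k)
    (hrange : 2 * α₀ - s α₀ ∈ Set.Ioo (-π) π) :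
    s α₀ = 2 * α₀ := by
  have hB : HasDerivAt (fun α ↦ s α - α) (-1) α₀ := by
    simpa only [zero_sub] using hs.fun_sub (hasDerivAt_id' α₀)
  have hsin : sin (2 * α₀ - s α₀) = 0 := by
    convert sin_sub_eq_zero_of_eventually_cosThirdAngle_eq hc one_ne_zero
      (hasDerivAt_id' α₀) hB hconst using 2
    ring
  exact (sub_eq_zero.mp ((sin_eq_zero_iff_of_lt_of_lt hrange.1 hrange.2).mp hsin)).symm

theorem stmt_2 (ℓ β α₀ : ℝ) (s : ℝ → ℝ)
    (hℓ : Real.cos ℓ ≠ 1)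
    (hdiff : DifferentiableAt ℝ s α₀)
    (hrel : ∀ᶠ α in nhds α₀,
      Real.cos β = -Real.cos α * Real.cos (s α - α)
        + Real.sin α * Real.sin (s α - α) * Real.cos ℓ)
    (hcrit : deriv s α₀ = 0)
    (hrange : 2 * α₀ - s α₀ ∈ Set.Ioo (-Real.pi) Real.pi) :
    s α₀ = 2 * α₀ :=
  stmt_2_general hℓ (hcrit ▸ hdiff.hasDerivAt) (hrel.mono fun _ h ↦ h.symm) hrange
end
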